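/- arXiv:quant-ph/0006114 — 4 statements merged into one kernel-verified Lean document; each statement's English description precedes it below -/
import Mathlib

section
/- (Kostant convexity for the pair (su(4), su(2)⊕su(2)).) Let Γ denote the orthogonal projection of su(4) onto 𝔥 = span_ℝ{iI_xS_x, iI_yS_y, iI_zS_z} with respect to the inner product ⟨A,B⟩ = tr(A†B). Then the image under Γ of the adjoint orbit {(k₁⊗k₂)⁻¹ (i I_zS_z) (k₁⊗k₂) : k₁, k₂ ∈ SU(2)} equals the convex hull of the six points {±iI_xS_x, ±iI_yS_y, ±iI_zS_z}. -/
open Kronecker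
open scoped Matrix

/-- One half times the Pauli matrix `σ_x`. -/
noncomputable def pax : Matrix (Fin 2) (Fin 2) ℂ := (1 / 2 : ℂ) • !![0, 1; 1, 0]

/-- One half times the Pauli matrix `σ_y`. -/
noncomputable def pay : Matrix (Fin 2) (Fin 2) ℂ :=
  (1 / 2 : ℂ) • !![0, -Complex.I; Complex.I, 0]

/-- One half times the Pauli matrix `σ_z`. -/
noncomputable def paz : Matrix (Fin 2) (Fin 2) ℂ := (1 / 2 : ℂ) • !![1, 0; 0, -1]

/-- The three spin-1/2 operators, indexed by `Fin 3` (`0 ↦ x`, `1 ↦ y`, `2 ↦ z`). -/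
noncomputable def pauli : Fin 3 → Matrix (Fin 2) (Fin 2) ℂ := ![pax, pay, paz]

/-- The first-spin operators `I_α = σ_α ⊗ 1`. -/
noncomputable def Iop (a : Fin 3) : Matrix (Fin 2 × Fin 2) (Fin 2 × Fin 2) ℂ :=
  pauli a ⊗ₖ (1 : Matrix (Fin 2) (Fin 2) ℂ)

/-- The second-spin operators `S_α = 1 ⊗ σ_α`. -/
noncomputable def Sop (a : Fin 3) : Matrix (Fin 2 × Fin 2) (Fin 2 × Fin 2) ℂ :=
  (1 : Matrix (Fin 2) (Fin 2) ℂ) ⊗ₖ pauli a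

noncomputable abbrev Ix' := Iop 0
noncomputable abbrev Iy' := Iop 1
noncomputable abbrev Iz' := Iop 2
noncomputable abbrev Sx' := Sop 0
noncomputable abbrev Sy' := Sop 1
noncomputable abbrev Sz' := Sop 2

/-- The subgroup `K = {k₁ ⊗ k₂ : k₁, k₂ ∈ SU(2)}` of `SU(4)`. -/
def K2 : Set (Matrix (Fin 2 × Fin 2) (Fin 2 × Fin 2) ℂ) :=
  {g | ∃ k₁ ∈ Matrix.specialUnitaryGroup (Fin 2) ℂ,
       ∃ k₂ ∈ Matrix.specialUnitaryGroup (Fin 2) ℂ, g = k₁ ⊗ₖ k₂}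

/-- The orthonormal direction `i I_αS_α` (for `α = x,y,z`) spanning the Cartan subalgebra
`𝔥 = span_ℝ{iI_xS_x, iI_yS_y, iI_zS_z}`. -/
noncomputable def hbasis (a : Fin 3) : Matrix (Fin 2 × Fin 2) (Fin 2 × Fin 2) ℂ :=
  Complex.I • (Iop a * Sop a)

/-- The orthogonal projection of `su(4)` onto `𝔥 = span_ℝ{iI_xS_x, iI_yS_y, iI_zS_z}` with
respect to the (real) inner product `⟨A,B⟩ = tr(A†B)`: the elements `i I_αS_α` are pairwise
orthogonal with `⟨iI_αS_α, iI_αS_α⟩ = 1/4`. -/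
noncomputable def Gamma (A : Matrix (Fin 2 × Fin 2) (Fin 2 × Fin 2) ℂ) :
    Matrix (Fin 2 × Fin 2) (Fin 2 × Fin 2) ℂ :=
  ∑ a : Fin 3, (4 * ((hbasis a)ᴴ * A).trace.re) • hbasis a

/-- The adjoint orbit `{(k₁⊗k₂)⁻¹ (i I_zS_z) (k₁⊗k₂) : k₁, k₂ ∈ SU(2)}`. -/
def adOrbitIzSz : Set (Matrix (Fin 2 × Fin 2) (Fin 2 × Fin 2) ℂ) :=
  {A | ∃ k₁ ∈ Matrix.specialUnitaryGroup (Fin 2) ℂ,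
       ∃ k₂ ∈ Matrix.specialUnitaryGroup (Fin 2) ℂ,
       A = (k₁ ⊗ₖ k₂)⁻¹ * (Complex.I • (Iz' * Sz')) * (k₁ ⊗ₖ k₂)}

/-- The Hermitian matrix `u · σ`. -/
noncomputable def spinVec (x y z : ℝ) : Matrix (Fin 2) (Fin 2) ℂ :=
  (1 / 2 : ℂ) • !![(z : ℂ), x - y * Complex.I; x + y * Complex.I, -z]

lemma trace_pauli_spinVec (x y z : ℝ) (a : Fin 3) :
    (pauli a * spinVec x y z).trace = ((![x, y, z] a / 2 : ℝ) : ℂ) := by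
  fin_cases a <;>
  simp [pauli, pax, pay, paz, spinVec, Matrix.trace, Fin.sum_univ_two, Matrix.mul_apply] <;>
  ring_nf <;> simp <;> ring

lemma pauli_conjTranspose (a : Fin 3) : (pauli a)ᴴ = pauli a := by
  fin_cases a <;> ext i j <;> fin_cases i <;> fin_cases j <;>
  simp [pauli, pax, pay, paz]

lemma hbasis_eq (a : Fin 3) : hbasis a = Complex.I • (pauli a ⊗ₖ pauli a) := by
  simp [hbasis, Iop, Sop, ← Matrix.mul_kronecker_mul]

lemma Gamma_spinVec (x y z x' y' z' : ℝ) :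
    Gamma (Complex.I • (spinVec x y z ⊗ₖ spinVec x' y' z')) =
      (x * x') • hbasis 0 + (y * y') • hbasis 1 + (z * z') • hbasis 2 := by
  have key : ∀ a, 4 * ((hbasis a)ᴴ * (Complex.I • (spinVec x y z ⊗ₖ spinVec x' y' z'))).trace.re
      = ![x, y, z] a * ![x', y', z'] a := by
    intro a
    rw [hbasis_eq, Matrix.conjTranspose_smul, Matrix.conjTranspose_kronecker, pauli_conjTranspose,
      Matrix.smul_mul, Matrix.mul_smul, ← Matrix.mul_kronecker_mul, smul_smul, Matrix.trace_smul,
      Matrix.trace_kronecker, trace_pauli_spinVec, trace_pauli_spinVec]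
    have : star Complex.I * Complex.I = 1 := by simp
    rw [this, one_smul, ← Complex.ofReal_mul, Complex.ofReal_re]
    ring
  simp only [Gamma, key, Fin.sum_univ_three]
  simp

lemma orbit_elt {k₁ k₂ : Matrix (Fin 2) (Fin 2) ℂ}
    (h₁ : k₁ ∈ Matrix.specialUnitaryGroup (Fin 2) ℂ)
    (h₂ : k₂ ∈ Matrix.specialUnitaryGroup (Fin 2) ℂ) :
    (k₁ ⊗ₖ k₂)⁻¹ * (Complex.I • (Iz' * Sz')) * (k₁ ⊗ₖ k₂) =
      Complex.I • ((k₁ᴴ * paz * k₁) ⊗ₖ (k₂ᴴ * paz * k₂)) := by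
  have inv : (k₁ ⊗ₖ k₂)⁻¹ = k₁ᴴ ⊗ₖ k₂ᴴ := by
    apply Matrix.inv_eq_left_inv
    have e₁ : k₁ᴴ * k₁ = 1 := Matrix.mem_unitaryGroup_iff'.1 (Matrix.mem_specialUnitaryGroup_iff.1 h₁).1
    have e₂ : k₂ᴴ * k₂ = 1 := Matrix.mem_unitaryGroup_iff'.1 (Matrix.mem_specialUnitaryGroup_iff.1 h₂).1
    rw [← Matrix.mul_kronecker_mul, e₁, e₂, Matrix.one_kronecker_one]
  have e := hbasis_eq 2
  simp only [hbasis] at e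
  rw [e, inv, Matrix.mul_smul, Matrix.smul_mul, ← Matrix.mul_kronecker_mul,
    ← Matrix.mul_kronecker_mul]
  rfl

lemma exists_spinVec {k : Matrix (Fin 2) (Fin 2) ℂ}
    (h : k ∈ Matrix.specialUnitaryGroup (Fin 2) ℂ) :
    ∃ x y z : ℝ, x ^ 2 + y ^ 2 + z ^ 2 = 1 ∧ kᴴ * paz * k = spinVec x y z := by
  have e : kᴴ * k = 1 := Matrix.mem_unitaryGroup_iff'.1 (Matrix.mem_specialUnitaryGroup_iff.1 h).1
  have e' : k * kᴴ = 1 := Matrix.mem_unitaryGroup_iff.1 (Matrix.mem_specialUnitaryGroup_iff.1 h).1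
  have hz : pazᴴ = paz := pauli_conjTranspose 2
  have hzz : paz * paz = (1 / 4 : ℂ) • 1 := by
    ext i j
    fin_cases i <;> fin_cases j <;> simp [paz] <;> norm_num
  obtain ⟨H, hH⟩ : ∃ H, H = kᴴ * paz * k := ⟨_, rfl⟩
  have hherm : Hᴴ = H := by
    rw [hH]; simp [Matrix.conjTranspose_mul, hz, Matrix.mul_assoc]
  have htr : H.trace = 0 := by
    rw [hH, Matrix.trace_mul_comm, ← Matrix.mul_assoc, e', one_mul]
    simp [paz, Matrix.trace, Fin.sum_univ_two]
  have hsq : H * H = (1 / 4 : ℂ) • 1 := by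
    calc H * H = kᴴ * paz * (k * kᴴ) * paz * k := by rw [hH]; simp only [Matrix.mul_assoc]
      _ = kᴴ * (paz * paz) * k := by rw [e']; simp only [Matrix.mul_assoc, Matrix.one_mul]
      _ = _ := by rw [hzz]; simp [e]
  rw [← hH]
  clear hH
  have h00 := congrFun (congrFun hherm 0) 0
  have h01 := congrFun (congrFun hherm 0) 1
  have hs := congrFun (congrFun hsq 0) 0
  simp [Matrix.mul_apply, Fin.sum_univ_two, Matrix.trace] at h00 h01 hs htr
  have hi := congrArg Complex.im h00
  have hsr := congrArg Complex.re hs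
  have r01 := congrArg Complex.re h01
  have i01 := congrArg Complex.im h01
  have htr0 := congrArg Complex.re htr
  have htr1 := congrArg Complex.im htr
  simp at hi hsr r01 i01 htr0 htr1
  refine ⟨2 * (H 0 1).re, -2 * (H 0 1).im, 2 * (H 0 0).re, ?_, ?_⟩
  · rw [r01] at hsr
    have : (H 0 0).im = 0 := by linarith
    rw [this, ← i01] at hsr
    rw [← r01, ← i01]
    rw [← r01] at hsr
    linarith
  · ext i j
    apply Complex.ext <;> fin_cases i <;> fin_cases j <;> simp [spinVec] <;> linarith

lemma exists_su2 (x y z : ℝ) (h : x ^ 2 + y ^ 2 + z ^ 2 = 1) :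
    ∃ k ∈ Matrix.specialUnitaryGroup (Fin 2) ℂ, kᴴ * paz * k = spinVec x y z := by
  obtain ⟨a, p, q, h1, h2, h3, h4⟩ : ∃ a p q : ℝ, a ^ 2 + p ^ 2 + q ^ 2 = 1 ∧
      a ^ 2 - p ^ 2 - q ^ 2 = z ∧ 2 * a * p = x ∧ 2 * a * q = -y := by
    by_cases hz : z = -1
    · subst hz
      refine ⟨0, 1, 0, by norm_num, by norm_num, ?_, ?_⟩ <;> nlinarith [sq_nonneg x, sq_nonneg y]
    · have hz1 : 0 < (1 + z) / 2 := by
        rcases lt_or_gt_of_ne hz with h' | h'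
        · nlinarith [sq_nonneg x, sq_nonneg y]
        · linarith
      have ha : 0 < √((1 + z) / 2) := Real.sqrt_pos.2 hz1
      have hs := Real.sq_sqrt hz1.le
      obtain ⟨a, hae⟩ : ∃ a, a = √((1 + z) / 2) := ⟨_, rfl⟩
      rw [← hae] at ha hs
      have hz2 : z = 2 * a ^ 2 - 1 := by linarith
      have hpq : (x / (2 * a)) ^ 2 + (-y / (2 * a)) ^ 2 = 1 - a ^ 2 := by
        field_simp
        subst hz2
        nlinarith
      refine ⟨a, x / (2 * a), -y / (2 * a), by linarith, by linarith, ?_, ?_⟩ <;> field_simp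
  refine ⟨!![(a : ℂ), p + q * Complex.I; -(p - q * Complex.I), a], ?_, ?_⟩
  · rw [Matrix.mem_specialUnitaryGroup_iff, Matrix.mem_unitaryGroup_iff]
    constructor
    · ext i j
      apply Complex.ext <;> fin_cases i <;> fin_cases j <;>
        simp [Matrix.mul_apply, Fin.sum_univ_two, Matrix.star_apply] <;> nlinarith
    · rw [Matrix.det_fin_two]
      apply Complex.ext <;> simp <;> nlinarith
  · ext i j
    apply Complex.ext <;> fin_cases i <;> fin_cases j <;>
      simp [Matrix.mul_apply, Fin.sum_univ_two, spinVec, paz] <;> nlinarith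

lemma exists_units (c₀ c₁ c₂ : ℝ) (h : |c₀| + |c₁| + |c₂| ≤ 1) :
    ∃ x y z x' y' z' : ℝ, x ^ 2 + y ^ 2 + z ^ 2 = 1 ∧ x' ^ 2 + y' ^ 2 + z' ^ 2 = 1 ∧
      x * x' = c₀ ∧ y * y' = c₁ ∧ z * z' = c₂ := by
  obtain ⟨y, y', hy, hy', hyy⟩ : ∃ y y' : ℝ, y ^ 2 = |c₁| ∧ y' ^ 2 = |c₁| ∧ y * y' = c₁ := by
    have hs := Real.sq_sqrt (abs_nonneg c₁)
    rcases le_total 0 c₁ with h' | h'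
    · refine ⟨√|c₁|, √|c₁|, hs, hs, ?_⟩
      rw [← sq, hs, abs_of_nonneg h']
    · refine ⟨√|c₁|, -√|c₁|, hs, by rw [neg_sq, hs], ?_⟩
      rw [mul_neg, ← sq, hs, abs_of_nonpos h', neg_neg]
  obtain ⟨m, hm⟩ : ∃ m, m = 1 - |c₁| := ⟨_, rfl⟩
  have hm' : |c₀| + |c₂| ≤ m := by linarith
  have hm0 : 0 ≤ m := by linarith [abs_nonneg c₀, abs_nonneg c₂]
  have hs := Real.sq_sqrt hm0
  have hcos : ∀ t, |t| ≤ m → m * Real.cos (Real.arccos (t / m)) = t := by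
    intro t ht
    rcases hm0.eq_or_lt with h0 | h0
    · rw [← h0] at ht ⊢
      have := abs_nonpos_iff.1 ht
      simp [this]
    · have := abs_le.1 ht
      rw [Real.cos_arccos]
      · field_simp
      · rw [le_div_iff₀ h0]; linarith
      · rw [div_le_iff₀ h0]; linarith
  have e₁ := hcos (c₀ + c₂) ((abs_add_le _ _).trans hm')
  have e₂ := hcos (c₀ - c₂) ((abs_sub _ _).trans hm')
  obtain ⟨α, hα⟩ : ∃ α, α = (Real.arccos ((c₀ - c₂) / m) + Real.arccos ((c₀ + c₂) / m)) / 2 :=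
    ⟨_, rfl⟩
  obtain ⟨β, hβ⟩ : ∃ β, β = (Real.arccos ((c₀ - c₂) / m) - Real.arccos ((c₀ + c₂) / m)) / 2 :=
    ⟨_, rfl⟩
  have f₁ : Real.arccos ((c₀ + c₂) / m) = α - β := by rw [hα, hβ]; ring
  have f₂ : Real.arccos ((c₀ - c₂) / m) = α + β := by rw [hα, hβ]; ring
  rw [f₁, Real.cos_sub] at e₁
  rw [f₂, Real.cos_add] at e₂
  refine ⟨√m * Real.cos α, y, √m * Real.sin α, √m * Real.cos β, y', √m * Real.sin β,
    ?_, ?_, ?_, hyy, ?_⟩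
  · rw [mul_pow, mul_pow, hs, hy]; linear_combination m * Real.sin_sq_add_cos_sq α + hm
  · rw [mul_pow, mul_pow, hs, hy']; linear_combination m * Real.sin_sq_add_cos_sq β + hm
  · linear_combination (Real.cos α * Real.cos β) * hs + e₁ / 2 + e₂ / 2
  · linear_combination (Real.sin α * Real.sin β) * hs + e₁ / 2 - e₂ / 2

lemma hull_eq {E : Type*} [AddCommGroup E] [Module ℝ E] (a b c : E) :
    convexHull ℝ ({a, -a, b, -b, c, -c} : Set E) =
      {v | ∃ r s t : ℝ, |r| + |s| + |t| ≤ 1 ∧ v = r • a + s • b + t • c} := by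
  apply Set.Subset.antisymm
  · apply convexHull_min
    · rintro v (rfl | rfl | rfl | rfl | rfl | rfl)
      · exact ⟨1, 0, 0, by simp, by simp⟩
      · exact ⟨-1, 0, 0, by simp, by simp⟩
      · exact ⟨0, 1, 0, by simp, by simp⟩
      · exact ⟨0, -1, 0, by simp, by simp⟩
      · exact ⟨0, 0, 1, by simp, by simp⟩
      · exact ⟨0, 0, -1, by simp, by simp⟩
    · rintro _ ⟨r, s, t, h, rfl⟩ _ ⟨r', s', t', h', rfl⟩ p q hp hq hpq
      refine ⟨p * r + q * r', p * s + q * s', p * t + q * t', ?_, by module⟩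
      have key : ∀ u u' : ℝ, |p * u + q * u'| ≤ p * |u| + q * |u'| := fun u u' => by
        refine (abs_add_le _ _).trans ?_
        rw [abs_mul, abs_mul, abs_of_nonneg hp, abs_of_nonneg hq]
      have := key r r'
      have := key s s'
      have := key t t'
      nlinarith
  · rintro _ ⟨r, s, t, h, rfl⟩
    obtain ⟨d, hd⟩ : ∃ d, d = (1 - (|r| + |s| + |t|)) / 6 := ⟨_, rfl⟩
    have hd0 : 0 ≤ d := by rw [hd]; linarith
    have := (convex_convexHull ℝ ({a, -a, b, -b, c, -c} : Set E)).sum_mem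
      (t := Finset.univ) (z := ![a, -a, b, -b, c, -c])
      (w := ![(|r| + r) / 2 + d, (|r| - r) / 2 + d, (|s| + s) / 2 + d, (|s| - s) / 2 + d,
        (|t| + t) / 2 + d, (|t| - t) / 2 + d]) ?_ ?_ ?_
    · convert this using 1
      simp [Fin.sum_univ_six]
      module
    · intro i _
      have := neg_abs_le r
      have := neg_abs_le s
      have := neg_abs_le t
      have := le_abs_self r
      have := le_abs_self s
      have := le_abs_self t
      fin_cases i <;> simp <;> linarith
    · simp [Fin.sum_univ_six]
      linarith
    · intro i _
      apply subset_convexHull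
      fin_cases i <;> simp

/- STATEMENT 7 (Kostant convexity for the pair `(su(4), su(2)⊕su(2))`): the image under `Γ`
of the adjoint orbit of `iI_zS_z` is the convex hull of `{±iI_xS_x, ±iI_yS_y, ±iI_zS_z}`. -/
theorem stmt_7 :
    Gamma '' adOrbitIzSz =
      convexHull ℝ ({hbasis 0, -hbasis 0, hbasis 1, -hbasis 1, hbasis 2, -hbasis 2} :
        Set (Matrix (Fin 2 × Fin 2) (Fin 2 × Fin 2) ℂ)) := by
  rw [hull_eq]
  ext v
  constructor
  · rintro ⟨_, ⟨k₁, h₁, k₂, h₂, rfl⟩, rfl⟩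
    obtain ⟨x, y, z, hu, e₁⟩ := exists_spinVec h₁
    obtain ⟨x', y', z', hv, e₂⟩ := exists_spinVec h₂
    rw [orbit_elt h₁ h₂, e₁, e₂, Gamma_spinVec]
    refine ⟨_, _, _, ?_, rfl⟩
    have key : ∀ u v : ℝ, |u * v| ≤ (u ^ 2 + v ^ 2) / 2 := fun u v => by
      rw [abs_le]; constructor <;> nlinarith [sq_nonneg (u + v), sq_nonneg (u - v)]
    linarith [key x x', key y y', key z z']
  · rintro ⟨r, s, t, h, rfl⟩
    obtain ⟨x, y, z, x', y', z', hu, hv, rfl, rfl, rfl⟩ := exists_units r s t h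
    obtain ⟨k₁, h₁, e₁⟩ := exists_su2 x y z hu
    obtain ⟨k₂, h₂, e₂⟩ := exists_su2 x' y' z' hv
    refine ⟨_, ⟨k₁, h₁, k₂, h₂, rfl⟩, ?_⟩
    rw [orbit_elt h₁ h₂, e₁, e₂, Gamma_spinVec]
end

section
/- Let J > 0 and 0 ≤ T ≤ 3/(2J). Then the maximum of f(α₁, α₂, α₃) = sin(Jπα₁)sin(Jπα₂) + sin(Jπα₁)sin(Jπα₃) over all α₁, α₂, α₃ ≥ 0 with α₁ + α₂ + α₃ = T equals 2 sin(Jπa) sin(Jπb), where a, b ∈ [0, 1/(2J)] satisfy a + 2b = T and sin(Jπa)cos(Jπb) = 2 cos(Jπa)sin(Jπb) (equivalently tan(Jπa) = 2 tan(Jπb)); such a pair (a, b) exists. -/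
open Real in
theorem aux_exists (S : ℝ) (h0 : 0 ≤ S) (h1 : S ≤ 3 * π / 2) :
    ∃ a b : ℝ, 0 ≤ a ∧ a ≤ π / 2 ∧ 0 ≤ b ∧ b ≤ π / 2 ∧ a + 2 * b = S ∧
      sin a * cos b = 2 * (cos a * sin b) := by
  have hpi := pi_pos
  have key : ∀ l r : ℝ, l ≤ r → 0 ≤ l → r ≤ π / 2 → 0 ≤ S - 2 * r → S - 2 * l ≤ π / 2 →
      0 ≤ sin (S - 2 * l) * cos l - 2 * (cos (S - 2 * l) * sin l) →
      sin (S - 2 * r) * cos r - 2 * (cos (S - 2 * r) * sin r) ≤ 0 →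
      ∃ a b : ℝ, 0 ≤ a ∧ a ≤ π / 2 ∧ 0 ≤ b ∧ b ≤ π / 2 ∧ a + 2 * b = S ∧
      sin a * cos b = 2 * (cos a * sin b) := by
    intro l r hlr hl hr hr' hl' h2 h3
    have hc : ContinuousOn (fun b : ℝ => sin (S - 2 * b) * cos b - 2 * (cos (S - 2 * b) * sin b))
      (Set.Icc l r) := by fun_prop
    obtain ⟨b, hb, hb'⟩ := intermediate_value_Icc' hlr hc ⟨h3, h2⟩
    simp only at hb'
    obtain ⟨hb1, hb2⟩ := hb
    exact ⟨S - 2 * b, b, by linarith, by linarith, by linarith, by linarith, by ring, by linarith⟩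
  rcases le_total S (π / 2) with h | h
  · apply key 0 (S / 2) <;> try linarith
    · simpa using sin_nonneg_of_nonneg_of_le_pi h0 (by linarith)
    · have := sin_nonneg_of_nonneg_of_le_pi (x := S / 2) (by linarith) (by linarith)
      rw [show S - 2 * (S / 2) = 0 by ring]
      simpa using this
  · have hl : 0 ≤ sin (S - 2 * ((S - π / 2) / 2)) * cos ((S - π / 2) / 2) -
        2 * (cos (S - 2 * ((S - π / 2) / 2)) * sin ((S - π / 2) / 2)) := by
      have := cos_nonneg_of_neg_pi_div_two_le_of_le (x := (S - π / 2) / 2)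
        (by linarith) (by linarith)
      rw [show S - 2 * ((S - π / 2) / 2) = π / 2 by ring]
      simpa using this
    rcases le_total S π with h' | h'
    · apply key ((S - π / 2) / 2) (S / 2) _ _ _ _ _ hl <;> try linarith
      have := sin_nonneg_of_nonneg_of_le_pi (x := S / 2) (by linarith) (by linarith)
      rw [show S - 2 * (S / 2) = 0 by ring]
      simpa using this
    · apply key ((S - π / 2) / 2) (π / 2) _ _ _ _ _ hl <;> try linarith
      have := cos_nonneg_of_neg_pi_div_two_le_of_le (x := S - 2 * (π / 2))
        (by linarith) (by linarith)
      simp only [cos_pi_div_two, sin_pi_div_two]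
      linarith

open Real in
theorem aux_max (a b t : ℝ) (ha : 0 ≤ a) (ha' : a ≤ π / 2) (hb : 0 ≤ b) (hb' : b ≤ π / 2)
    (h : sin a * cos b = 2 * (cos a * sin b)) (h1 : 0 ≤ a - 2 * t) (h2 : 0 ≤ b + t) :
    sin (a - 2 * t) * sin (b + t) ≤ sin a * sin b := by
  have hpi := pi_pos
  have hc : 0 ≤ cos t := cos_nonneg_of_neg_pi_div_two_le_of_le (by linarith) (by linarith)
  have hs : - sin b ≤ sin t := by
    rw [← sin_neg]
    exact sin_le_sin_of_le_of_le_pi_div_two (by linarith) (by linarith) (by linarith)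
  have hCa : 0 ≤ cos a := cos_nonneg_of_neg_pi_div_two_le_of_le (by linarith) (by linarith)
  have hCb : 0 ≤ cos b := cos_nonneg_of_neg_pi_div_two_le_of_le (by linarith) (by linarith)
  have hSa : 0 ≤ sin a := sin_nonneg_of_nonneg_of_le_pi (by linarith) (by linarith)
  have hSb : 0 ≤ sin b := sin_nonneg_of_nonneg_of_le_pi (by linarith) (by linarith)
  have hc1 := cos_le_one t
  have hb1 := cos_le_one b
  have hst := sin_sq_add_cos_sq t
  rw [sin_sub, sin_add, sin_two_mul, cos_two_mul]
  generalize cos t = c at *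
  generalize sin t = s at *
  generalize cos a = Ca at *
  generalize sin a = Sa at *
  generalize cos b = Cb at *
  generalize sin b = Sb at *
  have e : 2 * (Sa * Sb - (Sa * (2 * c ^ 2 - 1) - Ca * (2 * s * c)) * (Sb * c + Cb * s)) =
     (1 - c) * (4 * Ca * Cb * c * (1 + c) + Sa * (2 * Cb * s * (1 + c)
      + Sb * ((1 + 2 * c) ^ 2 + 1))) := by
    have hs2 : s ^ 2 = 1 - c ^ 2 := by linarith
    linear_combination (4 * Ca * Cb * c) * hs2 - 2 * s * c ^ 2 * h
  have k1 : 0 ≤ 2 * Cb * s * (1 + c) + Sb * ((1 + 2 * c) ^ 2 + 1) := by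
    have q1 : -Sb ≤ Cb * s := by nlinarith
    have q2 : -Sb * (1 + c) ≤ Cb * s * (1 + c) := mul_le_mul_of_nonneg_right q1 (by linarith)
    have q3 : 0 ≤ Sb * c := by positivity
    have q4 : 0 ≤ Sb * c ^ 2 := by positivity
    nlinarith
  have k2 : 0 ≤ (1 - c) * (4 * Ca * Cb * c * (1 + c) + Sa * (2 * Cb * s * (1 + c)
      + Sb * ((1 + 2 * c) ^ 2 + 1))) := by
    apply mul_nonneg (by linarith)
    have := mul_nonneg hSa k1
    positivity
  linarith

open Real in
theorem aux_bound (S a b x y z : ℝ) (h1 : S ≤ 3 * π / 2)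
    (ha : 0 ≤ a) (ha' : a ≤ π / 2) (hb : 0 ≤ b) (hb' : b ≤ π / 2) (hab : a + 2 * b = S)
    (h : sin a * cos b = 2 * (cos a * sin b)) (hx : 0 ≤ x) (hy : 0 ≤ y) (hz : 0 ≤ z)
    (hS : x + y + z = S) : sin x * sin y + sin x * sin z ≤ 2 * (sin a * sin b) := by
  have hpi := pi_pos
  have hSa : 0 ≤ sin a := sin_nonneg_of_nonneg_of_le_pi (by linarith) (by linarith)
  have hSb : 0 ≤ sin b := sin_nonneg_of_nonneg_of_le_pi (by linarith) (by linarith)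
  have hab0 := mul_nonneg hSa hSb
  rcases le_total 0 (sin x) with hsx | hsx
  · have hm := aux_max a b ((y + z) / 2 - b) ha ha' hb hb' h (by linarith) (by linarith)
    rw [show a - 2 * ((y + z) / 2 - b) = x by linarith,
      show b + ((y + z) / 2 - b) = (y + z) / 2 by ring] at hm
    have hsm : 0 ≤ sin ((y + z) / 2) :=
      sin_nonneg_of_nonneg_of_le_pi (by linarith) (by linarith)
    have e : sin y + sin z = 2 * (sin ((y + z) / 2) * cos ((y - z) / 2)) := by
      have e1 := sin_add ((y + z) / 2) ((y - z) / 2)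
      have e2 := sin_sub ((y + z) / 2) ((y - z) / 2)
      rw [show (y + z) / 2 + (y - z) / 2 = y by ring] at e1
      rw [show (y + z) / 2 - (y - z) / 2 = z by ring] at e2
      linarith
    have := mul_le_mul_of_nonneg_left (cos_le_one ((y - z) / 2)) (mul_nonneg hsx hsm)
    rw [← mul_add, e]
    linarith
  · rcases le_or_gt x π with hxp | hxp
    · have : sin x = 0 := le_antisymm hsx (sin_nonneg_of_nonneg_of_le_pi hx hxp)
      rw [this]; linarith
    · have hsy : 0 ≤ sin y := sin_nonneg_of_nonneg_of_le_pi (by linarith) (by linarith)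
      have hsz : 0 ≤ sin z := sin_nonneg_of_nonneg_of_le_pi (by linarith) (by linarith)
      have := mul_nonpos_of_nonpos_of_nonneg hsx hsy
      have := mul_nonpos_of_nonpos_of_nonneg hsx hsz
      linarith


/- STATEMENT 12: for `J > 0` and `0 ≤ T ≤ 3/(2J)`, the maximum of
`f(α₁,α₂,α₃) = sin(Jπα₁)sin(Jπα₂) + sin(Jπα₁)sin(Jπα₃)` over `αᵢ ≥ 0` with
`α₁ + α₂ + α₃ = T` equals `2 sin(Jπa) sin(Jπb)`, where `a, b ∈ [0, 1/(2J)]` satisfy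
`a + 2b = T` and `sin(Jπa)cos(Jπb) = 2 cos(Jπa)sin(Jπb)`; such a pair `(a,b)` exists. -/
theorem stmt_12 (J T : ℝ) (hJ : 0 < J) (hT0 : 0 ≤ T) (hT : T ≤ 3 / (2 * J)) :
    ∃ a ∈ Set.Icc (0 : ℝ) (1 / (2 * J)), ∃ b ∈ Set.Icc (0 : ℝ) (1 / (2 * J)),
      a + 2 * b = T ∧
      Real.sin (J * Real.pi * a) * Real.cos (J * Real.pi * b) =
        2 * (Real.cos (J * Real.pi * a) * Real.sin (J * Real.pi * b)) ∧
      IsGreatest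
        {x : ℝ | ∃ α₁ α₂ α₃ : ℝ, 0 ≤ α₁ ∧ 0 ≤ α₂ ∧ 0 ≤ α₃ ∧ α₁ + α₂ + α₃ = T ∧
          x = Real.sin (J * Real.pi * α₁) * Real.sin (J * Real.pi * α₂) +
              Real.sin (J * Real.pi * α₁) * Real.sin (J * Real.pi * α₃)}
        (2 * (Real.sin (J * Real.pi * a) * Real.sin (J * Real.pi * b))) := by
  have hpi := Real.pi_pos
  have hk : 0 < J * Real.pi := by positivity
  have hTJ : J * Real.pi * T ≤ 3 * Real.pi / 2 := by
    calc J * Real.pi * T ≤ J * Real.pi * (3 / (2 * J)) := by gcongr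
      _ = 3 * Real.pi / 2 := by field_simp
  obtain ⟨a, b, ha, ha', hb, hb', hab, h⟩ := aux_exists (J * Real.pi * T) (by positivity) hTJ
  have ea : J * Real.pi * (a / (J * Real.pi)) = a := by field_simp
  have eb : J * Real.pi * (b / (J * Real.pi)) = b := by field_simp
  have hle : ∀ c : ℝ, c ≤ Real.pi / 2 → c / (J * Real.pi) ≤ 1 / (2 * J) := by
    intro c hc
    rw [div_le_iff₀ hk]
    calc c ≤ Real.pi / 2 := hc
      _ = 1 / (2 * J) * (J * Real.pi) := by field_simp
  have hsum : a / (J * Real.pi) + 2 * (b / (J * Real.pi)) = T := by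
    have : a / (J * Real.pi) + 2 * (b / (J * Real.pi)) = (a + 2 * b) / (J * Real.pi) := by ring
    rw [this, hab]
    field_simp
  refine ⟨a / (J * Real.pi), ⟨by positivity, hle a ha'⟩, b / (J * Real.pi),
    ⟨by positivity, hle b hb'⟩, hsum, ?_, ?_, ?_⟩
  · rw [ea, eb]; exact h
  · refine ⟨a / (J * Real.pi), b / (J * Real.pi), b / (J * Real.pi), by positivity,
      by positivity, by positivity, by linarith, by ring⟩
  · rintro x ⟨α₁, α₂, α₃, h1, h2, h3, hs, rfl⟩
    rw [ea, eb]
    exact aux_bound (J * Real.pi * T) a b _ _ _ hTJ ha ha' hb hb' hab h (by positivity)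
      (by positivity) (by positivity) (by rw [← hs]; ring)
end

section
/- Let 𝔨 = span_ℝ{iI_x, iI_y, iI_z, iS_x, iS_y, iS_z} and 𝔪 = span_ℝ{i I_αS_β : α, β ∈ {x,y,z}} inside su(4). Then su(4) = 𝔪 ⊕ 𝔨 is a direct sum which is orthogonal with respect to the inner product ⟨A,B⟩ = tr(A†B), and the commutation relations [𝔨,𝔨] ⊆ 𝔨, [𝔪,𝔨] ⊆ 𝔪, and [𝔪,𝔪] ⊆ 𝔨 hold (i.e. (su(4), 𝔨) is a symmetric pair). -/
open Kronecker
open scoped Matrix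

/-- `𝔨 = span_ℝ{iI_x, iI_y, iI_z, iS_x, iS_y, iS_z}`. -/
noncomputable def kLie : Submodule ℝ (Matrix (Fin 2 × Fin 2) (Fin 2 × Fin 2) ℂ) :=
  Submodule.span ℝ
    ((Set.range fun a => Complex.I • Iop a) ∪ (Set.range fun a => Complex.I • Sop a))

/-- `𝔪 = span_ℝ{i I_αS_β : α, β ∈ {x,y,z}}`. -/
noncomputable def mLie : Submodule ℝ (Matrix (Fin 2 × Fin 2) (Fin 2 × Fin 2) ℂ) :=
  Submodule.span ℝ {A | ∃ a b : Fin 3, A = Complex.I • (Iop a * Sop b)}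

namespace SymPair

abbrev Mat := Matrix (Fin 2 × Fin 2) (Fin 2 × Fin 2) ℂ

/-- `4 σ_y ⊗ σ_y`. -/
noncomputable def Y : Mat := (4 : ℂ) • (pay ⊗ₖ pay)

/-- The Cartan involution. -/
noncomputable def th (A : Mat) : Mat := -(Y * Aᵀ * Y)

theorem Y_sq : Y * Y = 1 := by
  have h : pay * pay = (1 / 4 : ℂ) • 1 := by
    ext i j
    fin_cases i <;> fin_cases j <;>
      simp [pay, Matrix.mul_apply, Fin.sum_univ_two, Matrix.one_apply] <;> ring_nf <;> simp <;> norm_num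
  unfold Y
  rw [Matrix.smul_mul, Matrix.mul_smul, ← Matrix.mul_kronecker_mul, h, Matrix.smul_kronecker,
    Matrix.kronecker_smul, Matrix.one_kronecker_one]
  simp only [smul_smul]
  norm_num

theorem flip_pauli (a : Fin 3) : pay * (pauli a)ᵀ * pay = -((1 / 4 : ℂ) • pauli a) := by
  have hI := Complex.I_mul_I
  ext i j
  rw [Matrix.mul_apply, Fin.sum_univ_two, Matrix.mul_apply, Matrix.mul_apply, Fin.sum_univ_two,
    Fin.sum_univ_two]
  simp only [Matrix.transpose_apply]
  fin_cases a <;> fin_cases i <;> fin_cases j <;>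
    simp [pauli, pax, pay, paz] <;> grind

theorem eq_zero_of_self_eq_neg {A : Mat} (h : A = -A) : A = 0 := by
  ext i j
  exact self_eq_neg.mp (congrFun (congrFun h i) j)

theorem flip_one : pay * (1 : Matrix (Fin 2) (Fin 2) ℂ)ᵀ * pay = (1 / 4 : ℂ) • 1 := by
  ext i j
  fin_cases i <;> fin_cases j <;>
    simp [pay, Matrix.mul_apply, Fin.sum_univ_two, Matrix.one_apply] <;> ring_nf <;> simp <;> norm_num

theorem th_kron (P Q : Matrix (Fin 2) (Fin 2) ℂ) :
    th (P ⊗ₖ Q) = -((16 : ℂ) • ((pay * Pᵀ * pay) ⊗ₖ (pay * Qᵀ * pay))) := by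
  unfold th Y
  rw [Matrix.mul_kronecker_mul, Matrix.mul_kronecker_mul, Matrix.smul_mul, Matrix.smul_mul,
    Matrix.mul_smul, smul_smul, Matrix.kroneckerMap_transpose]
  norm_num

theorem th_add (A B : Mat) : th (A + B) = th A + th B := by
  simp only [th, Matrix.transpose_add, Matrix.mul_add, Matrix.add_mul]; abel

theorem th_smul (c : ℂ) (A : Mat) : th (c • A) = c • th A := by
  simp [th]

theorem th_rsmul (c : ℝ) (A : Mat) : th (c • A) = c • th A := by
  simp [th]

theorem th_sub (A B : Mat) : th (A - B) = th A - th B := by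
  simp only [th, Matrix.transpose_sub, Matrix.mul_sub, Matrix.sub_mul]; abel

theorem th_mul (A B : Mat) : th A * th B = -th (B * A) := by
  simp only [th, Matrix.transpose_mul, neg_mul_neg, neg_neg]
  calc Y * Aᵀ * Y * (Y * Bᵀ * Y) = Y * Aᵀ * (Y * Y) * Bᵀ * Y := by simp only [Matrix.mul_assoc]
    _ = _ := by rw [Y_sq]; simp only [Matrix.mul_assoc, Matrix.one_mul]

theorem th_br (A B : Mat) : th (A * B - B * A) = th A * th B - th B * th A := by
  rw [th_sub, th_mul, th_mul]; abel

theorem th_trace (A : Mat) : (th A).trace = -A.trace := by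
  rw [th, Matrix.trace_neg, Matrix.trace_mul_comm, ← Matrix.mul_assoc, Y_sq, Matrix.one_mul,
    Matrix.trace_transpose]

theorem th_I (a : Fin 3) : th (Iop a) = Iop a := by
  rw [Iop, th_kron, flip_pauli, flip_one]
  ext i j
  simp
  ring

theorem th_S (a : Fin 3) : th (Sop a) = Sop a := by
  rw [Sop, th_kron, flip_pauli, flip_one]
  ext i j
  simp
  ring

theorem IS (a b : Fin 3) : Iop a * Sop b = pauli a ⊗ₖ pauli b := by
  rw [Iop, Sop, ← Matrix.mul_kronecker_mul]; simp

theorem th_IS (a b : Fin 3) : th (Iop a * Sop b) = -(Iop a * Sop b) := by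
  rw [IS, th_kron, flip_pauli, flip_pauli]
  ext i j
  simp
  ring

def su (A : Mat) : Prop := Aᴴ = -A ∧ A.trace = 0

theorem su_add {A B : Mat} (hA : su A) (hB : su B) : su (A + B) := by
  refine ⟨?_, ?_⟩
  · rw [Matrix.conjTranspose_add, hA.1, hB.1]; abel
  · rw [Matrix.trace_add, hA.2, hB.2, add_zero]

theorem su_smul (c : ℝ) {A : Mat} (hA : su A) : su (c • A) := by
  refine ⟨?_, ?_⟩
  · rw [Matrix.conjTranspose_smul, hA.1]; simp
  · rw [Matrix.trace_smul, hA.2, smul_zero]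

theorem su_br {A B : Mat} (hA : su A) (hB : su B) : su (A * B - B * A) := by
  refine ⟨?_, ?_⟩
  · rw [Matrix.conjTranspose_sub, Matrix.conjTranspose_mul, Matrix.conjTranspose_mul, hA.1, hB.1]
    simp
  · rw [Matrix.trace_sub, Matrix.trace_mul_comm, sub_self]

theorem pauli_herm (a : Fin 3) : (pauli a)ᴴ = pauli a := by
  ext i j
  fin_cases a <;> fin_cases i <;> fin_cases j <;> simp [pauli, pax, pay, paz]

theorem pauli_trace (a : Fin 3) : (pauli a).trace = 0 := by
  fin_cases a <;> simp [pauli, pax, pay, paz, Matrix.trace, Fin.sum_univ_two]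

theorem su_kron {P Q : Matrix (Fin 2) (Fin 2) ℂ} (hP : Pᴴ = P) (hQ : Qᴴ = Q)
    (h : P.trace = 0 ∨ Q.trace = 0) : su (Complex.I • (P ⊗ₖ Q)) := by
  refine ⟨?_, ?_⟩
  · rw [Matrix.conjTranspose_smul, Matrix.conjTranspose_kronecker, hP, hQ]; simp
  · rw [Matrix.trace_smul, Matrix.trace_kronecker]
    rcases h with h | h <;> simp [h]

theorem k_sub {A : Mat} (h : A ∈ kLie) : su A ∧ th A = A := by
  induction h using Submodule.span_induction with
  | mem x hx =>
    rcases hx with ⟨a, rfl⟩ | ⟨a, rfl⟩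
    · exact ⟨su_kron (pauli_herm a) (by simp) (Or.inl (pauli_trace a)), by simp only [th_smul, th_I]⟩
    · exact ⟨su_kron (by simp) (pauli_herm a) (Or.inr (pauli_trace a)), by simp only [th_smul, th_S]⟩
  | zero => exact ⟨⟨by simp, by simp⟩, by simp [th]⟩
  | add x y _ _ hx hy => exact ⟨su_add hx.1 hy.1, by rw [th_add, hx.2, hy.2]⟩
  | smul c x _ hx => exact ⟨su_smul c hx.1, by rw [th_rsmul, hx.2]⟩

theorem m_sub {A : Mat} (h : A ∈ mLie) : su A ∧ th A = -A := by
  induction h using Submodule.span_induction with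
  | mem x hx =>
    obtain ⟨a, b, rfl⟩ := hx
    refine ⟨?_, by rw [th_smul, th_IS, smul_neg]⟩
    rw [IS]
    exact su_kron (pauli_herm a) (pauli_herm b) (Or.inl (pauli_trace a))
  | zero => exact ⟨⟨by simp, by simp⟩, by simp [th]⟩
  | add x y _ _ hx hy => exact ⟨su_add hx.1 hy.1, by rw [th_add, hx.2, hy.2]; abel⟩
  | smul c x _ hx => exact ⟨su_smul c hx.1, by rw [th_rsmul, hx.2, smul_neg]⟩

theorem mem_I (a : Fin 3) : Complex.I • Iop a ∈ kLie :=
  Submodule.subset_span (Or.inl ⟨a, rfl⟩)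

theorem mem_S (a : Fin 3) : Complex.I • Sop a ∈ kLie :=
  Submodule.subset_span (Or.inr ⟨a, rfl⟩)

theorem mem_IS (a b : Fin 3) : Complex.I • (Iop a * Sop b) ∈ mLie :=
  Submodule.subset_span ⟨a, b, rfl⟩

set_option maxHeartbeats 4000000 in
theorem decomp {A : Mat} (h : su A) : ∃ M ∈ mLie, ∃ X ∈ kLie, A = M + X := by
  refine ⟨∑ a, ∑ b, (4 * (A * (pauli a ⊗ₖ pauli b)).trace.im) • (Complex.I • (Iop a * Sop b)),
    Submodule.sum_mem _ fun a _ => Submodule.sum_mem _ fun b _ =>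
      Submodule.smul_mem _ _ (mem_IS a b),
    ∑ a, ((A * Iop a).trace.im • (Complex.I • Iop a) + (A * Sop a).trace.im • (Complex.I • Sop a)),
    Submodule.sum_mem _ fun a _ => Submodule.add_mem _ (Submodule.smul_mem _ _ (mem_I a))
      (Submodule.smul_mem _ _ (mem_S a)), ?_⟩
  obtain ⟨h1, h2⟩ := h
  have hre : ∀ i j, (A i j).re = -(A j i).re := fun i j => by
    have := congrArg Complex.re (congrFun (congrFun h1 j) i)
    simp at this
    linarith
  have him : ∀ i j, (A i j).im = (A j i).im := fun i j => by
    have := congrArg Complex.im (congrFun (congrFun h1 j) i)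
    simp at this
    linarith
  have htr := congrArg Complex.im h2
  simp [Matrix.trace, Fintype.sum_prod_type, Fin.sum_univ_two] at htr
  have r0 : ∀ i, (A i i).re = 0 := fun i => by linarith [hre i i]
  have a1 := hre (0,0) (0,1)
  have a2 := hre (0,0) (1,0)
  have a3 := hre (0,0) (1,1)
  have a4 := hre (0,1) (1,0)
  have a5 := hre (0,1) (1,1)
  have a6 := hre (1,0) (1,1)
  have b1 := him (0,0) (0,1)
  have b2 := him (0,0) (1,0)
  have b3 := him (0,0) (1,1)
  have b4 := him (0,1) (1,0)
  have b5 := him (0,1) (1,1)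
  have b6 := him (1,0) (1,1)
  have c1 := r0 (0,0)
  have c2 := r0 (0,1)
  have c3 := r0 (1,0)
  have c4 := r0 (1,1)
  clear hre him r0 h1 h2
  simp only [IS]
  ext ⟨i, j⟩ ⟨k, l⟩
  fin_cases i <;> fin_cases j <;> fin_cases k <;> fin_cases l <;> apply Complex.ext <;>
    simp [Iop, Sop, Fin.sum_univ_three, pauli, pax, pay, paz, Matrix.trace, Matrix.mul_apply,
      Fintype.sum_prod_type, Fin.sum_univ_two, Matrix.one_apply] <;> linarith

theorem k_of {A : Mat} (h : su A) (ht : th A = A) : A ∈ kLie := by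
  obtain ⟨M, hM, X, hX, rfl⟩ := decomp h
  rw [th_add, (m_sub hM).2, (k_sub hX).2] at ht
  have : M = 0 := eq_zero_of_self_eq_neg (add_right_cancel ht).symm
  rw [this, zero_add]; exact hX

theorem m_of {A : Mat} (h : su A) (ht : th A = -A) : A ∈ mLie := by
  obtain ⟨M, hM, X, hX, rfl⟩ := decomp h
  rw [th_add, (m_sub hM).2, (k_sub hX).2, neg_add] at ht
  have : X = 0 := eq_zero_of_self_eq_neg (add_left_cancel ht)
  rw [this, add_zero]; exact hM

end SymPair

/- STATEMENT 16: `su(4) = 𝔪 ⊕ 𝔨` is an orthogonal direct sum (w.r.t. `⟨A,B⟩ = tr(A†B)`)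
and `[𝔨,𝔨] ⊆ 𝔨`, `[𝔪,𝔨] ⊆ 𝔪`, `[𝔪,𝔪] ⊆ 𝔨`, i.e. `(su(4), 𝔨)` is a symmetric pair. -/
theorem stmt_16 :
    -- `su(4) = 𝔪 + 𝔨` …
    (∀ A : Matrix (Fin 2 × Fin 2) (Fin 2 × Fin 2) ℂ,
      (Aᴴ = -A ∧ A.trace = 0) ↔ ∃ M ∈ mLie, ∃ X ∈ kLie, A = M + X) ∧
    -- … the sum is direct …
    mLie ⊓ kLie = ⊥ ∧
    -- … and orthogonal w.r.t. `⟨A,B⟩ = tr(A†B)` …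
    (∀ M ∈ mLie, ∀ X ∈ kLie, (Mᴴ * X).trace = 0) ∧
    -- … with the commutation relations of a symmetric pair:
    (∀ A ∈ kLie, ∀ B ∈ kLie, A * B - B * A ∈ kLie) ∧
    (∀ A ∈ mLie, ∀ B ∈ kLie, A * B - B * A ∈ mLie) ∧
    (∀ A ∈ mLie, ∀ B ∈ mLie, A * B - B * A ∈ kLie) := by
  refine ⟨fun A => ⟨SymPair.decomp, ?_⟩, ?_, ?_, ?_, ?_, ?_⟩
  · rintro ⟨M, hM, X, hX, rfl⟩
    exact SymPair.su_add (SymPair.m_sub hM).1 (SymPair.k_sub hX).1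
  · rw [Submodule.eq_bot_iff]
    rintro A ⟨hm, hk⟩
    have h1 := (SymPair.m_sub hm).2
    rw [(SymPair.k_sub hk).2] at h1
    exact SymPair.eq_zero_of_self_eq_neg h1
  · intro M hM X hX
    have hm := SymPair.m_sub hM
    have hk := SymPair.k_sub hX
    have h := congrArg Matrix.trace (SymPair.th_mul M X)
    rw [hm.2, hk.2, Matrix.trace_neg, SymPair.th_trace, neg_neg, Matrix.trace_mul_comm X M,
      Matrix.neg_mul, Matrix.trace_neg] at h
    rw [hm.1.1, Matrix.neg_mul, Matrix.trace_neg, h]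
    exact neg_eq_self.mp h
  · intro A hA B hB
    have a := SymPair.k_sub hA
    have b := SymPair.k_sub hB
    exact SymPair.k_of (SymPair.su_br a.1 b.1) (by rw [SymPair.th_br, a.2, b.2])
  · intro A hA B hB
    have a := SymPair.m_sub hA
    have b := SymPair.k_sub hB
    refine SymPair.m_of (SymPair.su_br a.1 b.1) ?_
    rw [SymPair.th_br, a.2, b.2, Matrix.neg_mul, Matrix.mul_neg]
    abel
  · intro A hA B hB
    have a := SymPair.m_sub hA
    have b := SymPair.m_sub hB
    refine SymPair.k_of (SymPair.su_br a.1 b.1) ?_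
    rw [SymPair.th_br, a.2, b.2, neg_mul_neg, neg_mul_neg]
end

section
/- (𝔪 is the union of the K-conjugates of the Cartan subalgebra 𝔥.) For every A ∈ 𝔪 = span_ℝ{i I_αS_β : α, β ∈ {x,y,z}} ⊂ su(4), there exist k₁, k₂ ∈ SU(2) and Y ∈ 𝔥 = span_ℝ{iI_xS_x, iI_yS_y, iI_zS_z} such that A = (k₁⊗k₂)⁻¹ Y (k₁⊗k₂). -/
open Kronecker
open scoped Matrix

-- MINE
/-- The element of `-i 𝔪` with real coefficient matrix `N`. -/
noncomputable def Tm (N : Matrix (Fin 3) (Fin 3) ℝ) : Matrix (Fin 2 × Fin 2) (Fin 2 × Fin 2) ℂ :=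
  ∑ a, ∑ b, (N a b : ℂ) • (pauli a ⊗ₖ pauli b)

/-- `R` is the matrix of conjugation by `k`. -/
def ConjRep (k : Matrix (Fin 2) (Fin 2) ℂ) (R : Matrix (Fin 3) (Fin 3) ℝ) : Prop :=
  ∀ a, k * pauli a * star k = ∑ b, (R b a : ℂ) • pauli b

lemma kron_sum_left (f : Fin 3 → Matrix (Fin 2) (Fin 2) ℂ) (B : Matrix (Fin 2) (Fin 2) ℂ) :
    (∑ a, f a) ⊗ₖ B = ∑ a, f a ⊗ₖ B := by
  simp [Fin.sum_univ_three, Matrix.add_kronecker]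

lemma kron_sum_right (f : Fin 3 → Matrix (Fin 2) (Fin 2) ℂ) (B : Matrix (Fin 2) (Fin 2) ℂ) :
    B ⊗ₖ (∑ a, f a) = ∑ a, B ⊗ₖ f a := by
  simp [Fin.sum_univ_three, Matrix.kronecker_add]

lemma Tm_conj {k₁ k₂ : Matrix (Fin 2) (Fin 2) ℂ} {R₁ R₂ : Matrix (Fin 3) (Fin 3) ℝ}
    (h₁ : ConjRep k₁ R₁) (h₂ : ConjRep k₂ R₂) (N : Matrix (Fin 3) (Fin 3) ℝ) :
    (k₁ ⊗ₖ k₂) * Tm N * star (k₁ ⊗ₖ k₂) = Tm (R₁ * N * R₂ᵀ) := by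
  have e : ∀ a b, (k₁ ⊗ₖ k₂) * (pauli a ⊗ₖ pauli b) * star (k₁ ⊗ₖ k₂)
      = ∑ c, ∑ d, ((R₁ c a : ℂ) * (R₂ d b : ℂ)) • (pauli c ⊗ₖ pauli d) := by
    intro a b
    rw [Matrix.star_eq_conjTranspose, Matrix.conjTranspose_kronecker,
      ← Matrix.mul_kronecker_mul, ← Matrix.mul_kronecker_mul, ← Matrix.star_eq_conjTranspose,
      ← Matrix.star_eq_conjTranspose, h₁ a, h₂ b, kron_sum_left]
    refine Finset.sum_congr rfl fun c _ => ?_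
    rw [kron_sum_right]
    refine Finset.sum_congr rfl fun d _ => ?_
    rw [Matrix.smul_kronecker, Matrix.kronecker_smul, smul_smul]
  unfold Tm
  simp only [Finset.mul_sum, Finset.sum_mul, Matrix.mul_smul, Matrix.smul_mul, e]
  simp only [Fin.sum_univ_three, Matrix.mul_apply, Matrix.transpose_apply]
  push_cast
  module

lemma herm_rep (X : Matrix (Fin 2) (Fin 2) ℂ) (hX : star X = X) (ht : X.trace = 0) :
    ∃ v : Fin 3 → ℝ, X = ∑ b, (v b : ℂ) • pauli b := by
  refine ⟨![2 * (X 0 1).re, -2 * (X 0 1).im, 2 * (X 0 0).re], ?_⟩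
  have h00 := congrFun (congrFun hX 0) 0
  have h01 := congrFun (congrFun hX 1) 0
  rw [Matrix.trace_fin_two] at ht
  simp only [Matrix.star_apply] at h00 h01
  have i00 : (X 0 0).im = 0 := by
    have := congrArg Complex.im h00
    simp at this; linarith
  have h1 := congrArg Complex.re ht
  have h2 := congrArg Complex.im ht
  simp at h1 h2
  ext i j
  fin_cases i <;> fin_cases j <;>
    simp [Fin.sum_univ_three, pauli, pax, pay, paz, Complex.ext_iff, i00, ← h01] <;> grind

lemma pauli_star (a : Fin 3) : star (pauli a) = pauli a := by
  ext i j
  fin_cases a <;> fin_cases i <;> fin_cases j <;> simp [pauli, pax, pay, paz]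

lemma pauli_trace (a : Fin 3) : (pauli a).trace = 0 := by
  fin_cases a <;> simp [pauli, pax, pay, paz, Matrix.trace_fin_two]

lemma exists_rep (k : Matrix (Fin 2) (Fin 2) ℂ) (hk : k ∈ Matrix.specialUnitaryGroup (Fin 2) ℂ) :
    ∃ R, ConjRep k R := by
  have h : ∀ a, ∃ v : Fin 3 → ℝ, k * pauli a * star k = ∑ b, (v b : ℂ) • pauli b := by
    intro a
    apply herm_rep
    · simp [mul_assoc, pauli_star]
    · rw [Matrix.trace_mul_comm, ← mul_assoc,
        Matrix.mem_unitaryGroup_iff'.1 (Matrix.mem_specialUnitaryGroup_iff.1 hk).1, one_mul,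
        pauli_trace]
  choose v hv using h
  exact ⟨fun b a => v a b, hv⟩

lemma rep_one : ConjRep 1 1 := by
  intro a
  simp [Matrix.one_apply, apply_ite]

/-- Explicit rotations. -/
lemma rot (c s : ℝ) (h : c ^ 2 + s ^ 2 = 1) :
    (∃ k ∈ Matrix.specialUnitaryGroup (Fin 2) ℂ, ConjRep k
      !![1, 0, 0; 0, c ^ 2 - s ^ 2, -(2 * c * s); 0, 2 * c * s, c ^ 2 - s ^ 2]) ∧
    (∃ k ∈ Matrix.specialUnitaryGroup (Fin 2) ℂ, ConjRep k
      !![c ^ 2 - s ^ 2, 0, 2 * c * s; 0, 1, 0; -(2 * c * s), 0, c ^ 2 - s ^ 2]) ∧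
    (∃ k ∈ Matrix.specialUnitaryGroup (Fin 2) ℂ, ConjRep k
      !![c ^ 2 - s ^ 2, -(2 * c * s), 0; 2 * c * s, c ^ 2 - s ^ 2, 0; 0, 0, 1]) := by
  have h' : (c : ℂ) ^ 2 + (s : ℂ) ^ 2 = 1 := by exact_mod_cast h
  have hI : Complex.I ^ 2 = -1 := Complex.I_sq
  refine ⟨⟨!![(c : ℂ), -Complex.I * s; -Complex.I * s, c], ?_, ?_⟩,
    ⟨!![(c : ℂ), -s; s, c], ?_, ?_⟩,
    ⟨!![(c : ℂ) - Complex.I * s, 0; 0, c + Complex.I * s], ?_, ?_⟩⟩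
  all_goals first
    | (rw [Matrix.mem_specialUnitaryGroup_iff, Matrix.mem_unitaryGroup_iff]
       constructor
       · ext i j
         fin_cases i <;> fin_cases j <;>
           simp [Matrix.mul_apply, Matrix.star_apply] <;> grind
       · rw [Matrix.det_fin_two]
         simp
         grind)
    | (intro a
       ext i j
       fin_cases a <;> fin_cases i <;> fin_cases j <;>
         simp [Matrix.mul_apply, Matrix.star_apply, Fin.sum_univ_three, pauli, pax, pay, paz,
           Matrix.vecHead, Matrix.vecTail] <;>
         grind)

/-- The functional being maximised. -/
noncomputable def Lf (X : Matrix (Fin 2 × Fin 2) (Fin 2 × Fin 2) ℂ) : ℝ :=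
  (X * Tm !![1, 0, 0; 0, 2, 0; 0, 0, 3]).trace.re

lemma Lf_Tm (N : Matrix (Fin 3) (Fin 3) ℝ) :
    Lf (Tm N) = (N 0 0 + 2 * N 1 1 + 3 * N 2 2) / 4 := by
  have tr : ∀ a b, (pauli a * pauli b).trace = if a = b then 1 / 2 else 0 := by
    intro a b
    fin_cases a <;> fin_cases b <;>
      simp [pauli, pax, pay, paz, Matrix.trace_fin_two] <;> grind [Complex.I_sq]
  have tr' : ∀ a b c d, ((pauli a ⊗ₖ pauli b) * (pauli c ⊗ₖ pauli d)).trace =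
      (if a = c then 1 / 2 else 0) * (if b = d then 1 / 2 else 0) := by
    intro a b c d
    rw [← Matrix.mul_kronecker_mul, Matrix.trace_kronecker, tr, tr]
  have : (Tm N * Tm !![1, 0, 0; 0, 2, 0; 0, 0, 3]).trace =
      (((N 0 0 + 2 * N 1 1 + 3 * N 2 2) / 4 : ℝ) : ℂ) := by
    unfold Tm
    simp only [Finset.mul_sum, Finset.sum_mul, Matrix.mul_smul, Matrix.smul_mul,
      Matrix.trace_sum, Matrix.trace_smul, tr']
    simp [Fin.sum_univ_three]
    ring
  rw [Lf, this, Complex.ofReal_re]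

lemma isCompact_SU : IsCompact (Matrix.specialUnitaryGroup (Fin 2) ℂ :
    Set (Matrix (Fin 2) (Fin 2) ℂ)) := by
  have hc : IsCompact (Set.univ.pi fun _ : Fin 2 => Set.univ.pi fun _ : Fin 2 =>
      Metric.closedBall (0 : ℂ) 1) :=
    isCompact_univ_pi fun _ => isCompact_univ_pi fun _ => isCompact_closedBall _ _
  refine IsCompact.of_isClosed_subset (s := Set.univ.pi fun _ : Fin 2 =>
    Set.univ.pi fun _ : Fin 2 => Metric.closedBall (0 : ℂ) 1) hc ?_ ?_
  · have : (Matrix.specialUnitaryGroup (Fin 2) ℂ : Set (Matrix (Fin 2) (Fin 2) ℂ)) =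
        {k | k * star k = 1} ∩ {k | k.det = 1} := by
      ext k
      simp [Matrix.mem_specialUnitaryGroup_iff, Matrix.mem_unitaryGroup_iff]
    rw [this]
    refine IsClosed.inter (isClosed_eq ?_ continuous_const) (isClosed_eq ?_ continuous_const)
    · exact Continuous.mul continuous_id (continuous_star (R := Matrix (Fin 2) (Fin 2) ℂ))
    · exact Continuous.matrix_det continuous_id
  · intro k hk i _ j _
    simpa using entry_norm_bound_of_unitary (Matrix.mem_specialUnitaryGroup_iff.1 hk).1 i j

lemma crit (a b : ℝ) (h : ∀ c s : ℝ, c ^ 2 + s ^ 2 = 1 → a * (c ^ 2 - s ^ 2) + b * (2 * c * s) ≤ a) :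
    b = 0 := by
  by_contra hb
  have hp : 0 < |b| * (1 + |a|) := by positivity
  obtain ⟨t, ht⟩ : ∃ t, t = b / (|a| + 1) := ⟨_, rfl⟩
  have h1 : 0 < 1 + t ^ 2 := by positivity
  have hs := Real.sq_sqrt h1.le
  have hs0 : 0 < √(1 + t ^ 2) := Real.sqrt_pos.2 h1
  have := h (1 / √(1 + t ^ 2)) (t / √(1 + t ^ 2)) (by
    rw [div_pow _ (√(1 + t ^ 2)), div_pow _ (√(1 + t ^ 2)), hs]; field_simp)
  have e : a * ((1 / √(1 + t ^ 2)) ^ 2 - (t / √(1 + t ^ 2)) ^ 2)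
      + b * (2 * (1 / √(1 + t ^ 2)) * (t / √(1 + t ^ 2)))
      = (a * (1 - t ^ 2) + 2 * b * t) / (1 + t ^ 2) := by
    have : 2 * (1 / √(1 + t ^ 2)) * (t / √(1 + t ^ 2)) = 2 * t / (√(1 + t ^ 2)) ^ 2 := by
      field_simp
    rw [this, div_pow, div_pow, hs]
    field_simp
  rw [e, div_le_iff₀ h1] at this
  have hbt : b = t * (|a| + 1) := by rw [ht]; field_simp
  have ht0 : t ≠ 0 := by
    rintro h0; rw [h0] at hbt; simp at hbt; exact hb hbt
  have ht2 : 0 < t ^ 2 := by positivity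
  rw [hbt] at this
  nlinarith [le_abs_self a]

lemma conj_unit {k₁ k₂ : Matrix (Fin 2) (Fin 2) ℂ} (h₁ : k₁ ∈ Matrix.specialUnitaryGroup (Fin 2) ℂ)
    (h₂ : k₂ ∈ Matrix.specialUnitaryGroup (Fin 2) ℂ) :
    star (k₁ ⊗ₖ k₂) * (k₁ ⊗ₖ k₂) = 1 := by
  rw [Matrix.star_eq_conjTranspose, Matrix.conjTranspose_kronecker, ← Matrix.mul_kronecker_mul,
    ← Matrix.star_eq_conjTranspose, ← Matrix.star_eq_conjTranspose,
    Matrix.mem_unitaryGroup_iff'.1 (Matrix.mem_specialUnitaryGroup_iff.1 h₁).1,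
    Matrix.mem_unitaryGroup_iff'.1 (Matrix.mem_specialUnitaryGroup_iff.1 h₂).1,
    Matrix.one_kronecker_one]

lemma exists_max (M : Matrix (Fin 3) (Fin 3) ℝ) :
    ∃ k₁ ∈ Matrix.specialUnitaryGroup (Fin 2) ℂ, ∃ k₂ ∈ Matrix.specialUnitaryGroup (Fin 2) ℂ,
    ∃ N, (k₁ ⊗ₖ k₂) * Tm M * star (k₁ ⊗ₖ k₂) = Tm N ∧
      ∀ g₁ ∈ Matrix.specialUnitaryGroup (Fin 2) ℂ, ∀ g₂ ∈ Matrix.specialUnitaryGroup (Fin 2) ℂ,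
      ∀ R₁ R₂, ConjRep g₁ R₁ → ConjRep g₂ R₂ → Lf (Tm (R₁ * N * R₂ᵀ)) ≤ Lf (Tm N) := by
  have hcont : Continuous fun p : Matrix (Fin 2) (Fin 2) ℂ × Matrix (Fin 2) (Fin 2) ℂ =>
      Lf ((p.1 ⊗ₖ p.2) * Tm M * star (p.1 ⊗ₖ p.2)) := by
    have hk : Continuous fun p : Matrix (Fin 2) (Fin 2) ℂ × Matrix (Fin 2) (Fin 2) ℂ =>
        p.1 ⊗ₖ p.2 := by
      refine continuous_matrix fun i j => ?_
      simp only [Matrix.kroneckerMap_apply]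
      exact (continuous_fst.matrix_elem _ _).mul (continuous_snd.matrix_elem _ _)
    unfold Lf
    exact Complex.continuous_re.comp
      (Continuous.matrix_trace (((hk.mul continuous_const).mul hk.star).mul continuous_const))
  obtain ⟨⟨k₁, k₂⟩, ⟨hk₁, hk₂⟩, hmax⟩ := (isCompact_SU.prod isCompact_SU).exists_isMaxOn
    ⟨(1, 1), one_mem _, one_mem _⟩ hcont.continuousOn
  obtain ⟨R₁, hR₁⟩ := exists_rep k₁ hk₁
  obtain ⟨R₂, hR₂⟩ := exists_rep k₂ hk₂
  refine ⟨k₁, hk₁, k₂, hk₂, _, Tm_conj hR₁ hR₂ M, ?_⟩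
  intro g₁ hg₁ g₂ hg₂ Q₁ Q₂ hQ₁ hQ₂
  have := hmax (show (g₁ * k₁, g₂ * k₂) ∈ _ from ⟨mul_mem hg₁ hk₁, mul_mem hg₂ hk₂⟩)
  simp only [Set.mem_ofPred_eq] at this
  rw [Matrix.mul_kronecker_mul, star_mul] at this
  rw [← Tm_conj hQ₁ hQ₂, ← Tm_conj hR₁ hR₂]
  simpa only [mul_assoc] using this

lemma mem_mLie (A : Matrix (Fin 2 × Fin 2) (Fin 2 × Fin 2) ℂ) (hA : A ∈ mLie) :
    ∃ M, A = Complex.I • Tm M := by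
  unfold mLie at hA
  induction hA using Submodule.span_induction with
  | mem x hx =>
    obtain ⟨a, b, rfl⟩ := hx
    refine ⟨Matrix.single a b 1, ?_⟩
    congr 1
    rw [Iop, Sop, ← Matrix.mul_kronecker_mul, mul_one, one_mul, Tm]
    fin_cases a <;> fin_cases b <;> simp [Fin.sum_univ_three, Matrix.single]
  | zero => exact ⟨0, by simp [Tm]⟩
  | add x y _ _ hx hy =>
    obtain ⟨M, rfl⟩ := hx
    obtain ⟨N, rfl⟩ := hy
    exact ⟨M + N, by simp [Tm, add_smul, Finset.sum_add_distrib]⟩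
  | smul r x _ hx =>
    obtain ⟨M, rfl⟩ := hx
    refine ⟨r • M, ?_⟩
    rw [smul_comm]
    congr 1
    simp only [Tm, Finset.smul_sum, Matrix.smul_apply, smul_eq_mul, Complex.ofReal_mul, mul_smul]
    rfl

lemma offdiag (N : Matrix (Fin 3) (Fin 3) ℝ)
    (h : ∀ g₁ ∈ Matrix.specialUnitaryGroup (Fin 2) ℂ, ∀ g₂ ∈ Matrix.specialUnitaryGroup (Fin 2) ℂ,
      ∀ R₁ R₂, ConjRep g₁ R₁ → ConjRep g₂ R₂ → Lf (Tm (R₁ * N * R₂ᵀ)) ≤ Lf (Tm N)) :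
    ∀ i j, i ≠ j → N i j = 0 := by
  have hl : ∀ g ∈ Matrix.specialUnitaryGroup (Fin 2) ℂ, ∀ R, ConjRep g R →
      Lf (Tm (R * N)) ≤ Lf (Tm N) := by
    intro g hg R hR
    simpa using h g hg 1 (one_mem _) R 1 hR rep_one
  have hr : ∀ g ∈ Matrix.specialUnitaryGroup (Fin 2) ℂ, ∀ R, ConjRep g R →
      Lf (Tm (N * Rᵀ)) ≤ Lf (Tm N) := by
    intro g hg R hR
    simpa using h 1 (one_mem _) g hg 1 R rep_one hR
  simp only [Lf_Tm] at hl hr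
  have a1 := crit (2 * N 1 1 + 3 * N 2 2) (3 * N 1 2 - 2 * N 2 1) (by
    intro c s hcs
    obtain ⟨⟨k, hk, hR⟩, -, -⟩ := rot c s hcs
    have := hl k hk _ hR
    simp [Matrix.mul_apply, Fin.sum_univ_three] at this
    linarith)
  have a2 := crit (2 * N 1 1 + 3 * N 2 2) (3 * N 2 1 - 2 * N 1 2) (by
    intro c s hcs
    obtain ⟨⟨k, hk, hR⟩, -, -⟩ := rot c s hcs
    have := hr k hk _ hR
    simp [Matrix.mul_apply, Fin.sum_univ_three] at this
    linarith)
  have b1 := crit (N 0 0 + 3 * N 2 2) (N 2 0 - 3 * N 0 2) (by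
    intro c s hcs
    obtain ⟨-, ⟨k, hk, hR⟩, -⟩ := rot c s hcs
    have := hl k hk _ hR
    simp [Matrix.mul_apply, Fin.sum_univ_three] at this
    linarith)
  have b2 := crit (N 0 0 + 3 * N 2 2) (N 0 2 - 3 * N 2 0) (by
    intro c s hcs
    obtain ⟨-, ⟨k, hk, hR⟩, -⟩ := rot c s hcs
    have := hr k hk _ hR
    simp [Matrix.mul_apply, Fin.sum_univ_three] at this
    linarith)
  have c1 := crit (N 0 0 + 2 * N 1 1) (2 * N 0 1 - N 1 0) (by
    intro c s hcs
    obtain ⟨-, -, ⟨k, hk, hR⟩⟩ := rot c s hcs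
    have := hl k hk _ hR
    simp [Matrix.mul_apply, Fin.sum_univ_three] at this
    linarith)
  have c2 := crit (N 0 0 + 2 * N 1 1) (2 * N 1 0 - N 0 1) (by
    intro c s hcs
    obtain ⟨-, -, ⟨k, hk, hR⟩⟩ := rot c s hcs
    have := hr k hk _ hR
    simp [Matrix.mul_apply, Fin.sum_univ_three] at this
    linarith)
  intro i j hij
  fin_cases i <;> fin_cases j <;> simp at hij ⊢ <;> linarith

/- STATEMENT 18: every `A ∈ 𝔪` is conjugate by some `k₁ ⊗ k₂` (`k₁, k₂ ∈ SU(2)`) to an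
element `Y` of the Cartan subalgebra `𝔥 = span_ℝ{iI_xS_x, iI_yS_y, iI_zS_z}`:
`A = (k₁⊗k₂)⁻¹ Y (k₁⊗k₂)`. -/
theorem stmt_18 (A : Matrix (Fin 2 × Fin 2) (Fin 2 × Fin 2) ℂ) (hA : A ∈ mLie) :
    ∃ k₁ ∈ Matrix.specialUnitaryGroup (Fin 2) ℂ,
    ∃ k₂ ∈ Matrix.specialUnitaryGroup (Fin 2) ℂ,
    ∃ Y ∈ Submodule.span ℝ ({hbasis 0, hbasis 1, hbasis 2} :
        Set (Matrix (Fin 2 × Fin 2) (Fin 2 × Fin 2) ℂ)),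
      A = (k₁ ⊗ₖ k₂)⁻¹ * Y * (k₁ ⊗ₖ k₂) := by
  obtain ⟨M, rfl⟩ := mem_mLie A hA
  obtain ⟨k₁, hk₁, k₂, hk₂, N, hN, hmax⟩ := exists_max M
  have hoff := offdiag N hmax
  have hu := conj_unit hk₁ hk₂
  refine ⟨k₁, hk₁, k₂, hk₂, Complex.I • Tm N, ?_, ?_⟩
  · have e : Complex.I • Tm N = N 0 0 • hbasis 0 + N 1 1 • hbasis 1 + N 2 2 • hbasis 2 := by
      have hb : ∀ a, hbasis a = Complex.I • (pauli a ⊗ₖ pauli a) := by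
        intro a
        rw [hbasis, Iop, Sop, ← Matrix.mul_kronecker_mul, mul_one, one_mul]
      have hs : ∀ (r : ℝ) (X : Matrix (Fin 2 × Fin 2) (Fin 2 × Fin 2) ℂ),
          r • X = (r : ℂ) • X := fun r X => rfl
      simp only [hb, hs, Tm, Fin.sum_univ_three, hoff 0 1 (by decide), hoff 0 2 (by decide),
        hoff 1 0 (by decide), hoff 1 2 (by decide), hoff 2 0 (by decide), hoff 2 1 (by decide)]
      push_cast
      module
    rw [e]
    refine add_mem (add_mem ?_ ?_) ?_ <;>
      exact Submodule.smul_mem _ _ (Submodule.subset_span (by simp))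
  · rw [Matrix.inv_eq_left_inv hu, ← hN, Matrix.mul_smul, Matrix.smul_mul]
    congr 1
    calc Tm M = (star (k₁ ⊗ₖ k₂) * (k₁ ⊗ₖ k₂)) * Tm M * (star (k₁ ⊗ₖ k₂) * (k₁ ⊗ₖ k₂)) := by
          rw [hu, one_mul, mul_one]
      _ = _ := by simp only [mul_assoc]
end
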